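/- Let Ω ⊆ ℝ³ be open and let u : Ω → ℝ be smooth with Δ_H u = 0 on Ω. Then the following Bochner-type identity holds pointwise on Ω: (1/2)·Δ_H(|∇_H u|²) = (X²u)² + (XYu)² + (YXu)² + (Y²u)² + 8·(Xu·Y(Tu) − Yu·X(Tu)). -/

import Mathlib

noncomputable section

open Complex

/-- The underlying space of the first Heisenberg group: ℝ³ with coordinates (x, y, t). -/
abbrev Heis : Type := ℝ × ℝ × ℝ

/-- The left-invariant vector field X = ∂/∂x + 2y ∂/∂t, as a derivation. -/
def XD {E : Type*} [NormedAddCommGroup E] [NormedSpace ℝ E] (u : Heis → E) (p : Heis) : E :=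
  fderiv ℝ u p (1, 0, 2 * p.2.1)

/-- The left-invariant vector field Y = ∂/∂y − 2x ∂/∂t, as a derivation. -/
def YD {E : Type*} [NormedAddCommGroup E] [NormedSpace ℝ E] (u : Heis → E) (p : Heis) : E :=
  fderiv ℝ u p (0, 1, -(2 * p.1))

/-- The vector field T = ∂/∂t, as a derivation. -/
def TD {E : Type*} [NormedAddCommGroup E] [NormedSpace ℝ E] (u : Heis → E) (p : Heis) : E :=
  fderiv ℝ u p (0, 0, 1)

/-- Z = (X − iY)/2. -/
def ZD (u : Heis → ℂ) (p : Heis) : ℂ := (XD u p - Complex.I * YD u p) / 2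

/-- Z̄ = (X + iY)/2. -/
def ZbD (u : Heis → ℂ) (p : Heis) : ℂ := (XD u p + Complex.I * YD u p) / 2

/-- The complexification F = f₁ + i f₂ of the horizontal components. -/
def CF (f1 f2 : Heis → ℝ) : Heis → ℂ := fun p => (f1 p : ℂ) + (f2 p : ℂ) * Complex.I

/-- Complexification of a real-valued function. -/
def Cplx (u : Heis → ℝ) : Heis → ℂ := fun p => (u p : ℂ)

/-- The horizontal Jacobian J_F = Xf₁·Yf₂ − Yf₁·Xf₂. -/
def JF (f1 f2 : Heis → ℝ) (p : Heis) : ℝ := XD f1 p * YD f2 p - YD f1 p * XD f2 p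

/-- The contact equations on Ω. -/
def ContactOn (f1 f2 f3 : Heis → ℝ) (Ω : Set Heis) : Prop :=
  ∀ p ∈ Ω, XD f3 p - 2 * f2 p * XD f1 p + 2 * f1 p * XD f2 p = 0 ∧
           YD f3 p - 2 * f2 p * YD f1 p + 2 * f1 p * YD f2 p = 0

/-- f = (f₁,f₂,f₃) is conformal on Ω: smooth, contact, J_F > 0, and the conformality
equations hold. -/
def ConformalOn (f1 f2 f3 : Heis → ℝ) (Ω : Set Heis) : Prop :=
  ContDiffOn ℝ (⊤ : ℕ∞) f1 Ω ∧ ContDiffOn ℝ (⊤ : ℕ∞) f2 Ω ∧ ContDiffOn ℝ (⊤ : ℕ∞) f3 Ω ∧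
  ContactOn f1 f2 f3 Ω ∧ (∀ p ∈ Ω, 0 < JF f1 f2 p) ∧
  ∀ p ∈ Ω, (XD f1 p) ^ 2 + (XD f2 p) ^ 2 = (YD f1 p) ^ 2 + (YD f2 p) ^ 2 ∧
           XD f1 p * YD f1 p + XD f2 p * YD f2 p = 0

/-- The sub-Laplacian Δ_H = X² + Y². -/
def LapH {E : Type*} [NormedAddCommGroup E] [NormedSpace ℝ E] (u : Heis → E) (p : Heis) : E :=
  XD (XD u) p + YD (YD u) p

/-- The CR Schwarzian derivative S_CR(f) = (1/2)·J_F·Z²(J_F⁻¹). -/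
def SCR (f1 f2 : Heis → ℝ) (p : Heis) : ℂ :=
  (1 / 2 : ℂ) * (JF f1 f2 p : ℂ) * ZD (ZD (fun q => (((JF f1 f2 q)⁻¹ : ℝ) : ℂ))) p

/-- The classical type Schwarzian S_CL(f) = Z³F/ZF − (3/2)(Z²F/ZF)². -/
def SCL (f1 f2 : Heis → ℝ) (p : Heis) : ℂ :=
  ZD (ZD (ZD (CF f1 f2))) p / ZD (CF f1 f2) p
    - (3 / 2 : ℂ) * (ZD (ZD (CF f1 f2)) p / ZD (CF f1 f2) p) ^ 2

/-- The Preschwarzian Pf = Z(ln J_F). -/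
def PS (f1 f2 : Heis → ℝ) (p : Heis) : ℂ := ZD (Cplx (fun q => Real.log (JF f1 f2 q))) p

/-- The map (f₁,f₂,f₃) packaged as a map Heis → Heis. -/
def Fmap (f1 f2 f3 : Heis → ℝ) (p : Heis) : Heis := (f1 p, f2 p, f3 p)

section HeisenbergCalculus

variable {Ω : Set Heis} {u v : Heis → ℝ} {p : Heis}

lemma ContDiffOn.fderiv_apply_field (hΩ : IsOpen Ω) (hu : ContDiffOn ℝ (⊤ : ℕ∞) u Ω)
    {V : Heis → Heis} (hV : ContDiff ℝ (⊤ : ℕ∞) V) :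
    ContDiffOn ℝ (⊤ : ℕ∞) (fun q => fderiv ℝ u q (V q)) Ω :=
  (hu.fderiv_of_isOpen hΩ (m := (⊤ : ℕ∞)) (by simp)).clm_apply hV.contDiffOn

lemma ContDiffOn.XD (hΩ : IsOpen Ω) (hu : ContDiffOn ℝ (⊤ : ℕ∞) u Ω) :
    ContDiffOn ℝ (⊤ : ℕ∞) (XD u) Ω :=
  hu.fderiv_apply_field hΩ (V := fun q => (1, 0, 2 * q.2.1)) (by fun_prop)

lemma ContDiffOn.YD (hΩ : IsOpen Ω) (hu : ContDiffOn ℝ (⊤ : ℕ∞) u Ω) :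
    ContDiffOn ℝ (⊤ : ℕ∞) (YD u) Ω :=
  hu.fderiv_apply_field hΩ (V := fun q => (0, 1, -(2 * q.1))) (by fun_prop)

lemma ContDiffOn.TD (hΩ : IsOpen Ω) (hu : ContDiffOn ℝ (⊤ : ℕ∞) u Ω) :
    ContDiffOn ℝ (⊤ : ℕ∞) (TD u) Ω :=
  hu.fderiv_apply_field hΩ (V := fun _ => (0, 0, 1)) (by fun_prop)

lemma ContDiffOn.differentiableAt_of_isOpen (hΩ : IsOpen Ω)
    (hu : ContDiffOn ℝ (⊤ : ℕ∞) u Ω) (hp : p ∈ Ω) : DifferentiableAt ℝ u p :=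
  (hu.contDiffAt (hΩ.mem_nhds hp)).differentiableAt (by simp)

lemma fderiv_congr_of_eqOn_isOpen (hΩ : IsOpen Ω) (h : Set.EqOn u v Ω) (hp : p ∈ Ω) :
    fderiv ℝ u p = fderiv ℝ v p :=
  (h.eventuallyEq_of_mem (hΩ.mem_nhds hp)).fderiv_eq

lemma XD_congr (hΩ : IsOpen Ω) (h : Set.EqOn u v Ω) (hp : p ∈ Ω) : XD u p = XD v p := by
  simp only [XD, fderiv_congr_of_eqOn_isOpen hΩ h hp]

lemma YD_congr (hΩ : IsOpen Ω) (h : Set.EqOn u v Ω) (hp : p ∈ Ω) : YD u p = YD v p := by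
  simp only [YD, fderiv_congr_of_eqOn_isOpen hΩ h hp]

/-- The commutator of two directional derivatives is the derivative along the Lie bracket. -/
lemma fderiv_fderiv_apply_sub (hΩ : IsOpen Ω) (hu : ContDiffOn ℝ (⊤ : ℕ∞) u Ω) (hp : p ∈ Ω)
    {V W : Heis → Heis} (hV : DifferentiableAt ℝ V p) (hW : DifferentiableAt ℝ W p) :
    fderiv ℝ (fun q => fderiv ℝ u q (W q)) p (V p)
        - fderiv ℝ (fun q => fderiv ℝ u q (V q)) p (W p)
      = fderiv ℝ u p (fderiv ℝ W p (V p) - fderiv ℝ V p (W p)) := by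
  have hu' := hu.contDiffAt (hΩ.mem_nhds hp)
  have hd : DifferentiableAt ℝ (fderiv ℝ u) p :=
    (hu'.fderiv_right (m := (⊤ : ℕ∞)) (by simp)).differentiableAt (by simp)
  have hs : IsSymmSndFDerivAt ℝ u p := hu'.isSymmSndFDerivAt
    (by simpa using WithTop.coe_le_coe.2 (le_top (a := (2 : ℕ∞))))
  rw [fderiv_clm_apply hd hW, fderiv_clm_apply hd hV]
  simp [hs.eq (V p) (W p)]

lemma hasFDerivAt_X_field (p : Heis) : HasFDerivAt (fun q : Heis => ((1, 0, 2 * q.2.1) : Heis))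
    ((0 : Heis →L[ℝ] ℝ).prod ((0 : Heis →L[ℝ] ℝ).prod ((2 : ℝ) •
      (ContinuousLinearMap.fst ℝ ℝ ℝ).comp (ContinuousLinearMap.snd ℝ ℝ (ℝ × ℝ))))) p :=
  (hasFDerivAt_const _ _).prodMk ((hasFDerivAt_const _ _).prodMk
    ((hasFDerivAt_snd.fst).const_mul 2))

lemma hasFDerivAt_Y_field (p : Heis) : HasFDerivAt (fun q : Heis => ((0, 1, -(2 * q.1)) : Heis))
    ((0 : Heis →L[ℝ] ℝ).prod ((0 : Heis →L[ℝ] ℝ).prod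
      (-((2 : ℝ) • ContinuousLinearMap.fst ℝ ℝ (ℝ × ℝ))))) p :=
  (hasFDerivAt_const _ _).prodMk ((hasFDerivAt_const _ _).prodMk (hasFDerivAt_fst.const_mul 2).neg)

/-- The bracket relation `[X, Y] = -4T`. -/
lemma YD_XD (hΩ : IsOpen Ω) (hu : ContDiffOn ℝ (⊤ : ℕ∞) u Ω) (hp : p ∈ Ω) :
    YD (XD u) p = XD (YD u) p + 4 * TD u p := by
  have h := fderiv_fderiv_apply_sub hΩ hu hp (hasFDerivAt_Y_field p).differentiableAt
    (hasFDerivAt_X_field p).differentiableAt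
  rw [(hasFDerivAt_X_field p).fderiv, (hasFDerivAt_Y_field p).fderiv] at h
  have h4 : ((0, 0, 2 * 1 - -(2 * 1)) : Heis) = (4 : ℝ) • (0, 0, 1) := by
    ext <;> norm_num
  simp only [ContinuousLinearMap.prod_apply, zero_apply,
    smul_apply, neg_apply, ContinuousLinearMap.comp_apply,
    ContinuousLinearMap.coe_fst', ContinuousLinearMap.coe_snd', Prod.mk_sub_mk, sub_self,
    smul_eq_mul, h4, map_smul] at h
  exact sub_eq_iff_eq_add'.mp h

lemma TD_XD (hΩ : IsOpen Ω) (hu : ContDiffOn ℝ (⊤ : ℕ∞) u Ω) (hp : p ∈ Ω) :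
    TD (XD u) p = XD (TD u) p := by
  have h := fderiv_fderiv_apply_sub hΩ hu hp (differentiableAt_const ((0, 0, 1) : Heis))
    (hasFDerivAt_X_field p).differentiableAt
  rw [(hasFDerivAt_X_field p).fderiv] at h
  have h0 : ((0, 0, 0) : Heis) = 0 := rfl
  simp only [fderiv_fun_const, Pi.zero_apply, ContinuousLinearMap.prod_apply, zero_apply,
    smul_apply, ContinuousLinearMap.comp_apply, ContinuousLinearMap.coe_fst',
    ContinuousLinearMap.coe_snd', smul_eq_mul, mul_zero, sub_zero, h0, map_zero] at h
  exact sub_eq_zero.mp h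

lemma TD_YD (hΩ : IsOpen Ω) (hu : ContDiffOn ℝ (⊤ : ℕ∞) u Ω) (hp : p ∈ Ω) :
    TD (YD u) p = YD (TD u) p := by
  have h := fderiv_fderiv_apply_sub hΩ hu hp (differentiableAt_const ((0, 0, 1) : Heis))
    (hasFDerivAt_Y_field p).differentiableAt
  rw [(hasFDerivAt_Y_field p).fderiv] at h
  have h0 : ((0, 0, 0) : Heis) = 0 := rfl
  simp only [fderiv_fun_const, Pi.zero_apply, ContinuousLinearMap.prod_apply, zero_apply,
    smul_apply, neg_apply, ContinuousLinearMap.coe_fst', smul_eq_mul, mul_zero, neg_zero,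
    sub_zero, h0, map_zero] at h
  exact sub_eq_zero.mp h

lemma XD_add (hu : DifferentiableAt ℝ u p) (hv : DifferentiableAt ℝ v p) :
    XD (fun q => u q + v q) p = XD u p + XD v p := by
  simp [XD, fderiv_fun_add hu hv]

lemma YD_add (hu : DifferentiableAt ℝ u p) (hv : DifferentiableAt ℝ v p) :
    YD (fun q => u q + v q) p = YD u p + YD v p := by
  simp [YD, fderiv_fun_add hu hv]

lemma XD_const_mul (hu : DifferentiableAt ℝ u p) (c : ℝ) :
    XD (fun q => c * u q) p = c * XD u p := by
  simp [XD, fderiv_const_mul hu c]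

lemma YD_const_mul (hu : DifferentiableAt ℝ u p) (c : ℝ) :
    YD (fun q => c * u q) p = c * YD u p := by
  simp [YD, fderiv_const_mul hu c]

lemma XD_mul (hu : DifferentiableAt ℝ u p) (hv : DifferentiableAt ℝ v p) :
    XD (fun q => u q * v q) p = u p * XD v p + v p * XD u p := by
  simp [XD, fderiv_fun_mul hu hv]

lemma YD_mul (hu : DifferentiableAt ℝ u p) (hv : DifferentiableAt ℝ v p) :
    YD (fun q => u q * v q) p = u p * YD v p + v p * YD u p := by
  simp [YD, fderiv_fun_mul hu hv]

lemma LapH_add (hΩ : IsOpen Ω) (hu : ContDiffOn ℝ (⊤ : ℕ∞) u Ω)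
    (hv : ContDiffOn ℝ (⊤ : ℕ∞) v Ω) (hp : p ∈ Ω) :
    LapH (fun q => u q + v q) p = LapH u p + LapH v p := by
  have hX : Set.EqOn (XD fun q => u q + v q) (fun q => XD u q + XD v q) Ω := fun q hq =>
    XD_add (hu.differentiableAt_of_isOpen hΩ hq) (hv.differentiableAt_of_isOpen hΩ hq)
  have hY : Set.EqOn (YD fun q => u q + v q) (fun q => YD u q + YD v q) Ω := fun q hq =>
    YD_add (hu.differentiableAt_of_isOpen hΩ hq) (hv.differentiableAt_of_isOpen hΩ hq)
  rw [LapH, LapH, LapH, XD_congr hΩ hX hp, YD_congr hΩ hY hp,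
    XD_add ((hu.XD hΩ).differentiableAt_of_isOpen hΩ hp)
      ((hv.XD hΩ).differentiableAt_of_isOpen hΩ hp),
    YD_add ((hu.YD hΩ).differentiableAt_of_isOpen hΩ hp)
      ((hv.YD hΩ).differentiableAt_of_isOpen hΩ hp)]
  ring

lemma LapH_sq (hΩ : IsOpen Ω) (hu : ContDiffOn ℝ (⊤ : ℕ∞) u Ω) (hp : p ∈ Ω) :
    LapH (fun q => u q ^ 2) p = 2 * (XD u p ^ 2 + YD u p ^ 2 + u p * LapH u p) := by
  have hd : ∀ q ∈ Ω, DifferentiableAt ℝ u q := fun q hq => hu.differentiableAt_of_isOpen hΩ hq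
  have hdX := (hu.XD hΩ).differentiableAt_of_isOpen hΩ hp
  have hdY := (hu.YD hΩ).differentiableAt_of_isOpen hΩ hp
  have hX : Set.EqOn (XD fun q => u q ^ 2) (fun q => 2 * (u q * XD u q)) Ω := fun q hq => by
    simp only [pow_two, XD_mul (hd q hq) (hd q hq)]
    ring
  have hY : Set.EqOn (YD fun q => u q ^ 2) (fun q => 2 * (u q * YD u q)) Ω := fun q hq => by
    simp only [pow_two, YD_mul (hd q hq) (hd q hq)]
    ring
  rw [LapH, LapH, XD_congr hΩ hX hp, YD_congr hΩ hY hp, XD_const_mul ((hd p hp).fun_mul hdX),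
    YD_const_mul ((hd p hp).fun_mul hdY), XD_mul (hd p hp) hdX, YD_mul (hd p hp) hdY]
  ring

/-- The commutator of the sub-Laplacian with `X`. -/
lemma LapH_XD (hΩ : IsOpen Ω) (hu : ContDiffOn ℝ (⊤ : ℕ∞) u Ω) (hp : p ∈ Ω) :
    LapH (XD u) p = XD (LapH u) p + 8 * YD (TD u) p := by
  have hT := (hu.TD hΩ).differentiableAt_of_isOpen hΩ hp
  have hYX : Set.EqOn (YD (XD u)) (fun q => XD (YD u) q + 4 * TD u q) Ω := fun q hq =>
    YD_XD hΩ hu hq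
  have hL : XD (LapH u) p = XD (XD (XD u)) p + XD (YD (YD u)) p :=
    XD_add (((hu.XD hΩ).XD hΩ).differentiableAt_of_isOpen hΩ hp)
      (((hu.YD hΩ).YD hΩ).differentiableAt_of_isOpen hΩ hp)
  rw [hL, LapH, YD_congr hΩ hYX hp,
    YD_add (((hu.YD hΩ).XD hΩ).differentiableAt_of_isOpen hΩ hp) (hT.const_mul 4),
    YD_const_mul hT, YD_XD hΩ (hu.YD hΩ) hp, TD_YD hΩ hu hp]
  ring

/-- The commutator of the sub-Laplacian with `Y`. -/
lemma LapH_YD (hΩ : IsOpen Ω) (hu : ContDiffOn ℝ (⊤ : ℕ∞) u Ω) (hp : p ∈ Ω) :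
    LapH (YD u) p = YD (LapH u) p - 8 * XD (TD u) p := by
  have hT := (hu.TD hΩ).differentiableAt_of_isOpen hΩ hp
  have hYX : Set.EqOn (YD (XD u)) (fun q => XD (YD u) q + 4 * TD u q) Ω := fun q hq =>
    YD_XD hΩ hu hq
  have hL : YD (LapH u) p = YD (XD (XD u)) p + YD (YD (YD u)) p :=
    YD_add (((hu.XD hΩ).XD hΩ).differentiableAt_of_isOpen hΩ hp)
      (((hu.YD hΩ).YD hΩ).differentiableAt_of_isOpen hΩ hp)
  rw [hL, LapH, YD_XD hΩ (hu.XD hΩ) hp, XD_congr hΩ hYX hp,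
    XD_add (((hu.YD hΩ).XD hΩ).differentiableAt_of_isOpen hΩ hp) (hT.const_mul 4),
    XD_const_mul hT, TD_XD hΩ hu hp]
  ring

end HeisenbergCalculus

/-- the Bochner-type identity for sub-Laplacian harmonic functions:
(1/2)Δ_H(|∇_H u|²) = (X²u)² + (XYu)² + (YXu)² + (Y²u)² + 8(Xu·Y(Tu) − Yu·X(Tu)). -/
theorem stmt_18 (Ω : Set Heis) (hΩ : IsOpen Ω) (u : Heis → ℝ)
    (hu : ContDiffOn ℝ (⊤ : ℕ∞) u Ω) (hharm : ∀ p ∈ Ω, LapH u p = 0) :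
    ∀ p ∈ Ω,
      (1 / 2) * LapH (fun q => (XD u q) ^ 2 + (YD u q) ^ 2) p
        = (XD (XD u) p) ^ 2 + (XD (YD u) p) ^ 2 + (YD (XD u) p) ^ 2 + (YD (YD u) p) ^ 2
          + 8 * (XD u p * YD (TD u) p - YD u p * XD (TD u) p) := by
  intro p hp
  have hX : XD (LapH u) p = 0 := by
    rw [XD_congr hΩ (v := fun _ => 0) hharm hp]
    simp [XD]
  have hY : YD (LapH u) p = 0 := by
    rw [YD_congr hΩ (v := fun _ => 0) hharm hp]
    simp [YD]
  rw [LapH_add hΩ ((hu.XD hΩ).pow 2) ((hu.YD hΩ).pow 2) hp, LapH_sq hΩ (hu.XD hΩ) hp,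
    LapH_sq hΩ (hu.YD hΩ) hp, LapH_XD hΩ hu hp, LapH_YD hΩ hu hp, hX, hY]
  ring
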